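/- arXiv:2303.02390 — 5 statements merged into one kernel-verified Lean document; each statement's English description precedes it below -/
import Mathlib

section
/- For all positive integers c and n, every c-closed graph on n vertices has at most 3^{(c-1)/3} · n^2 maximal cliques. -/
/-- A graph `G` is `c`-closed if whenever two distinct vertices have at least `c`
common neighbors, they are adjacent. -/
def CClosed {V : Type*} (c : ℕ) (G : SimpleGraph V) : Prop :=
  ∀ u w : V, u ≠ w → c ≤ (G.neighborSet u ∩ G.neighborSet w).ncard → G.Adj u w

/-- `K` is a maximal clique of `G`: a clique not properly contained in any other clique. -/
def IsMaxClique {V : Type*} (G : SimpleGraph V) (K : Set V) : Prop :=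
  G.IsClique K ∧ ∀ K' : Set V, G.IsClique K' → K ⊆ K' → K = K'

open Classical in
/-- Maximal cliques of the subgraph of `G` induced on the finset `S`. -/
noncomputable def mcS {V : Type*} (G : SimpleGraph V) (S : Finset V) : Finset (Finset V) :=
  S.powerset.filter fun K =>
    (∀ x ∈ K, ∀ y ∈ K, x ≠ y → G.Adj x y) ∧ ∀ v ∈ S, ∃ u ∈ K, ¬ G.Adj v u

theorem mem_mcS {V : Type*} (G : SimpleGraph V) (S K : Finset V) :
    K ∈ mcS G S ↔ K ⊆ S ∧ (∀ x ∈ K, ∀ y ∈ K, x ≠ y → G.Adj x y) ∧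
      ∀ v ∈ S, ∃ u ∈ K, ¬ G.Adj v u := by
  simp [mcS]

theorem cube_le_three_pow (k : ℕ) : k ^ 3 ≤ 3 ^ k := by
  induction k using Nat.strong_induction_on with
  | _ k ih =>
    match k with
    | 0 => norm_num
    | 1 => norm_num
    | 2 => norm_num
    | 3 => norm_num
    | k + 4 =>
      have h := ih (k + 3) (by omega)
      rw [pow_succ 3 (k + 3)]
      nlinarith [sq_nonneg k, Nat.zero_le (k ^ 3)]

open Classical in
theorem moon_moser {V : Type*} (G : SimpleGraph V) (a : ℝ) (ha : 1 ≤ a) (ha3 : a ^ 3 = 3)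
    (m : ℕ) : ∀ S : Finset V, S.card = m → ((mcS G S).card : ℝ) ≤ a ^ m := by
  induction m using Nat.strong_induction_on with
  | _ m ih =>
    intro S hS
    rcases S.eq_empty_or_nonempty with rfl | hne
    · have h1 : mcS G (∅ : Finset V) ⊆ {∅} := by
        intro K hK
        rw [mem_mcS] at hK
        simpa using hK.1
      have h2 := Finset.card_le_card h1
      have h3 : ((mcS G (∅ : Finset V)).card : ℝ) ≤ 1 := by
        simpa using h2
      exact h3.trans (one_le_pow₀ ha)
    · let N : V → Finset V := fun w => S.filter fun x => ¬ G.Adj w x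
      obtain ⟨v, hv, hmin⟩ := S.exists_min_image (fun w => (N w).card) hne
      have hsub : mcS G S ⊆ (N v).biUnion fun w =>
          (mcS G (S.filter fun x => G.Adj w x)).image (insert w) := by
        intro K hK
        rw [mem_mcS] at hK
        obtain ⟨hKS, hcl, hmax⟩ := hK
        obtain ⟨w, hwK, hw⟩ := hmax v hv
        rw [Finset.mem_biUnion]
        refine ⟨w, by simp [N, hKS hwK, hw], ?_⟩
        rw [Finset.mem_image]
        refine ⟨K.erase w, ?_, Finset.insert_erase hwK⟩
        rw [mem_mcS]
        refine ⟨?_, ?_, ?_⟩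
        · intro x hx
          rw [Finset.mem_erase] at hx
          simp only [Finset.mem_filter]
          exact ⟨hKS hx.2, hcl w hwK x hx.2 (Ne.symm hx.1)⟩
        · intro x hx y hy
          exact hcl x (Finset.mem_of_mem_erase hx) y (Finset.mem_of_mem_erase hy)
        · intro x hx
          simp only [Finset.mem_filter] at hx
          obtain ⟨u, hu, hxu⟩ := hmax x hx.1
          refine ⟨u, Finset.mem_erase.2 ⟨?_, hu⟩, hxu⟩
          rintro rfl
          exact hxu hx.2.symm
      have hk : ((N v).card : ℝ) ≤ a ^ (N v).card := by
        have h1 : (((N v).card : ℝ)) ^ 3 ≤ (a ^ (N v).card) ^ 3 := by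
          rw [← pow_mul, mul_comm, pow_mul, ha3]
          exact_mod_cast cube_le_three_pow _
        exact le_of_pow_le_pow_left₀ (by norm_num) (by positivity) h1
      have hkm : (N v).card ≤ m := hS ▸ Finset.card_le_card (Finset.filter_subset _ _)
      have hb : ∀ w ∈ N v, (((mcS G (S.filter fun x => G.Adj w x)).image (insert w)).card : ℝ)
          ≤ a ^ (m - (N v).card) := by
        intro w hw
        have hwS : w ∈ S := (Finset.mem_filter.1 hw).1
        have hadd : (S.filter fun x => G.Adj w x).card + (N w).card = m := by
          rw [← hS]; exact Finset.card_filter_add_card_filter_not _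
        have hwN : 0 < (N w).card := Finset.card_pos.2 ⟨w, by simp [N, hwS]⟩
        have h1 := ih _ (by omega) (S.filter fun x => G.Adj w x) rfl
        have h2 := hmin w hwS
        calc (((mcS G (S.filter fun x => G.Adj w x)).image (insert w)).card : ℝ)
            ≤ (mcS G (S.filter fun x => G.Adj w x)).card := by exact_mod_cast Finset.card_image_le
          _ ≤ _ := h1
          _ ≤ _ := pow_le_pow_right₀ ha (by omega)
      calc ((mcS G S).card : ℝ) ≤ ((N v).biUnion fun w =>
          (mcS G (S.filter fun x => G.Adj w x)).image (insert w)).card := by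
            exact_mod_cast Finset.card_le_card hsub
        _ ≤ ∑ w ∈ N v, (((mcS G (S.filter fun x => G.Adj w x)).image (insert w)).card : ℝ) := by
            exact_mod_cast Finset.card_biUnion_le
        _ ≤ ∑ w ∈ N v, a ^ (m - (N v).card) := Finset.sum_le_sum hb
        _ = (N v).card * a ^ (m - (N v).card) := by simp
        _ ≤ a ^ (N v).card * a ^ (m - (N v).card) := by gcongr
        _ = a ^ m := by rw [← pow_add]; congr 1; omega

open Classical in
theorem mcS_bound {V : Type*} (G : SimpleGraph V) (a : ℝ) (ha : 1 ≤ a) (ha3 : a ^ 3 = 3)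
    (d : ℕ) (hd : ∀ (S : Finset V) (u v : V), u ≠ v → ¬ G.Adj u v →
      (S.filter fun x => G.Adj u x ∧ G.Adj v x).card ≤ d) (S : Finset V) :
    ((mcS G S).card : ℝ) ≤ a ^ d * ((S.card : ℝ) ^ 2 - S.card + 1) := by
  induction S using Finset.induction_on with
  | empty =>
    have h := moon_moser G a ha ha3 0 ∅ rfl
    have := one_le_pow₀ (n := d) ha
    rw [pow_zero] at h
    simp only [Finset.card_empty]
    norm_num
    linarith
  | insert v S hvS ih =>
    let T : V → Finset V := fun u => S.filter fun x => G.Adj u x ∧ G.Adj v x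
    let U : Finset V := S.filter fun u => ¬ G.Adj u v
    let P := (mcS G (insert v S)).filter fun K => K.erase v ∈ mcS G S
    have hP : P.card ≤ (mcS G S).card := by
      refine Finset.card_le_card_of_injOn (fun K => K.erase v) ?_ ?_
      · intro K hK
        exact (Finset.mem_filter.1 hK).2
      · have key : ∀ K ∈ P, ∀ K' ∈ P, K.erase v = K'.erase v → v ∈ K → v ∈ K' := by
          intro K hK K' hK' h hv
          by_contra hv'
          have h1 := (mem_mcS _ _ _).1 (Finset.mem_filter.1 hK).1
          have h2 := (mem_mcS _ _ _).1 (Finset.mem_filter.1 hK').1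
          obtain ⟨u, hu, hvu⟩ := h2.2.2 v (Finset.mem_insert_self _ _)
          rw [Finset.erase_eq_of_notMem hv'] at h
          rw [← h, Finset.mem_erase] at hu
          exact hvu (h1.2.1 v hv u hu.2 (Ne.symm hu.1))
        intro K hK K' hK' h
        have h1 := key K hK K' hK' h
        have h2 := key K' hK' K hK h.symm
        ext x
        by_cases hx : x = v
        · subst hx; exact ⟨h1, h2⟩
        · have h3 := Finset.ext_iff.1 h x
          simpa [hx] using h3
    have hsub : mcS G (insert v S) ⊆ P ∪ U.biUnion fun u => (mcS G (T u)).image (insert v) := by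
      intro K hK
      rw [Finset.mem_union]
      by_cases hKP : K.erase v ∈ mcS G S
      · left; exact Finset.mem_filter.2 ⟨hK, hKP⟩
      right
      obtain ⟨hKS, hcl, hmax⟩ := (mem_mcS _ _ _).1 hK
      have hKS' : K.erase v ⊆ S := by
        intro x hx
        rw [Finset.mem_erase] at hx
        exact (Finset.mem_insert.1 (hKS hx.2)).resolve_left hx.1
      have hcl' : ∀ x ∈ K.erase v, ∀ y ∈ K.erase v, x ≠ y → G.Adj x y := fun x hx y hy =>
        hcl x (Finset.mem_of_mem_erase hx) y (Finset.mem_of_mem_erase hy)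
      have hex : ∃ u ∈ S, ∀ x ∈ K.erase v, G.Adj u x := by
        by_contra! hcon
        exact hKP ((mem_mcS _ _ _).2 ⟨hKS', hcl', hcon⟩)
      obtain ⟨u, huS, hu⟩ := hex
      obtain ⟨y, hyK, hy⟩ := hmax u (Finset.mem_insert_of_mem huS)
      have hyv : y = v := by
        by_contra hne
        exact hy (hu y (Finset.mem_erase.2 ⟨hne, hyK⟩))
      subst hyv
      rw [Finset.mem_biUnion]
      refine ⟨u, Finset.mem_filter.2 ⟨huS, hy⟩, Finset.mem_image.2
        ⟨K.erase y, ?_, Finset.insert_erase hyK⟩⟩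
      rw [mem_mcS]
      refine ⟨?_, hcl', ?_⟩
      · intro x hx
        have hx' := Finset.mem_erase.1 hx
        exact Finset.mem_filter.2 ⟨hKS' hx, hu x hx, hcl y hyK x hx'.2 (Ne.symm hx'.1)⟩
      · intro x hx
        obtain ⟨hxS, -, hyx⟩ := Finset.mem_filter.1 hx
        obtain ⟨z, hz, hxz⟩ := hmax x (Finset.mem_insert_of_mem hxS)
        refine ⟨z, Finset.mem_erase.2 ⟨?_, hz⟩, hxz⟩
        rintro rfl
        exact hxz hyx.symm
    have hb : ∀ u ∈ U, (((mcS G (T u)).image (insert v)).card : ℝ) ≤ a ^ d := by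
      intro u hu
      obtain ⟨huS, huv⟩ := Finset.mem_filter.1 hu
      have hne : u ≠ v := by rintro rfl; exact hvS huS
      calc (((mcS G (T u)).image (insert v)).card : ℝ) ≤ (mcS G (T u)).card := by
            exact_mod_cast Finset.card_image_le
        _ ≤ a ^ (T u).card := moon_moser G a ha ha3 _ _ rfl
        _ ≤ a ^ d := pow_le_pow_right₀ ha (hd S u v hne huv)
    have hQ : ((U.biUnion fun u => (mcS G (T u)).image (insert v)).card : ℝ) ≤ S.card * a ^ d := by
      calc ((U.biUnion fun u => (mcS G (T u)).image (insert v)).card : ℝ)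
          ≤ ∑ u ∈ U, (((mcS G (T u)).image (insert v)).card : ℝ) := by
            exact_mod_cast Finset.card_biUnion_le
        _ ≤ ∑ u ∈ U, a ^ d := Finset.sum_le_sum hb
        _ = U.card * a ^ d := by simp
        _ ≤ S.card * a ^ d := by
            have : U.card ≤ S.card := Finset.card_le_card (Finset.filter_subset _ _)
            gcongr
    have htot : ((mcS G (insert v S)).card : ℝ) ≤ P.card +
        (U.biUnion fun u => (mcS G (T u)).image (insert v)).card := by
      exact_mod_cast (Finset.card_le_card hsub).trans (Finset.card_union_le _ _)
    have hP' : (P.card : ℝ) ≤ (mcS G S).card := by exact_mod_cast hP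
    rw [Finset.card_insert_of_notMem hvS]
    push_cast
    have hpos : 0 ≤ a ^ d * (S.card : ℝ) := by positivity
    nlinarith

/-- Every `c`-closed graph on `n` vertices has at most `3 ^ ((c - 1)/3) * n ^ 2`
maximal cliques. -/
theorem cClosed_card_maxCliques_le {V : Type*} [Fintype V] {c n : ℕ}
    (hc : 0 < c) (hn : 0 < n) (G : SimpleGraph V)
    (hcard : Fintype.card V = n) (hG : CClosed c G) :
    ({K : Set V | IsMaxClique G K}.ncard : ℝ) ≤
      3 ^ (((c : ℝ) - 1) / 3) * (n : ℝ) ^ 2 := by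
  classical
  obtain ⟨d, rfl⟩ : ∃ d, c = d + 1 := ⟨c - 1, by omega⟩
  have ha : (1 : ℝ) ≤ 3 ^ (1 / 3 : ℝ) := Real.one_le_rpow (by norm_num) (by norm_num)
  have ha3 : ((3 : ℝ) ^ (1 / 3 : ℝ)) ^ 3 = 3 := by
    rw [← Real.rpow_natCast, ← Real.rpow_mul (by norm_num)]; norm_num
  have had : (3 : ℝ) ^ ((((d + 1 : ℕ) : ℝ) - 1) / 3) = ((3 : ℝ) ^ (1 / 3 : ℝ)) ^ d := by
    rw [← Real.rpow_natCast, ← Real.rpow_mul (by norm_num)]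
    congr 1; push_cast; ring
  have hd : ∀ (S : Finset V) (u v : V), u ≠ v → ¬ G.Adj u v →
      (S.filter fun x => G.Adj u x ∧ G.Adj v x).card ≤ d := by
    intro S u v huv hadj
    by_contra! hlt
    refine hadj (hG u v huv (le_trans hlt ?_))
    rw [← Set.ncard_coe_finset]
    refine Set.ncard_le_ncard ?_ (Set.toFinite _)
    intro x hx
    simp only [Finset.coe_filter, Set.mem_setOf_eq] at hx
    exact hx.2
  have hle : {K : Set V | IsMaxClique G K}.ncard ≤ (mcS G Finset.univ).card := by
    rw [← Set.ncard_coe_finset]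
    refine Set.ncard_le_ncard_of_injOn (fun K => K.toFinset) ?_ ?_ (Set.toFinite _)
    · rintro K ⟨hK, hmax⟩
      rw [Finset.mem_coe, mem_mcS]
      refine ⟨Finset.subset_univ _, ?_, ?_⟩
      · intro x hx y hy hxy
        exact hK (Set.mem_toFinset.1 hx) (Set.mem_toFinset.1 hy) hxy
      · intro v _
        by_contra! hcon
        have hcon' : ∀ u ∈ K, G.Adj v u := fun u hu => hcon u (Set.mem_toFinset.2 hu)
        have h1 : G.IsClique (insert v K) := hK.insert fun b hb _ => hcon' b hb
        have h2 := hmax _ h1 (Set.subset_insert _ _)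
        have h3 : v ∈ K := h2 ▸ Set.mem_insert v K
        exact G.irrefl (hcon' v h3)
    · intro K _ K' _ h
      exact Set.toFinset_inj.1 h
  have hmain := mcS_bound G _ ha ha3 d hd Finset.univ
  rw [Finset.card_univ, hcard] at hmain
  rw [had]
  have hle' : ({K : Set V | IsMaxClique G K}.ncard : ℝ) ≤ (mcS G Finset.univ).card := by
    exact_mod_cast hle
  have hn' : (1 : ℝ) ≤ n := by exact_mod_cast hn
  refine hle'.trans (hmain.trans ?_)
  gcongr
  linarith
end

section
/- For all positive integers c and n, every weakly c-closed graph on n vertices has at most 3^{(c-1)/3} · n^2 maximal cliques. -/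
/-- `u` and `w` form a bad pair (for the value `c`) inside the subgraph of `G`
induced by `S`: they lie in `S`, are distinct and non-adjacent, and have at least
`c` common neighbors within `S`. -/
def BadPairIn {V : Type*} (c : ℕ) (G : SimpleGraph V) (S : Set V) (u w : V) : Prop :=
  u ∈ S ∧ w ∈ S ∧ u ≠ w ∧ ¬ G.Adj u w ∧
    c ≤ (G.neighborSet u ∩ G.neighborSet w ∩ S).ncard

/-- A graph is weakly `c`-closed if there is an ordering `v_1, …, v_n` of its
vertices such that for all `i`, the vertex `v_i` is in no bad pair in the
subgraph induced by `{v_i, v_{i+1}, …, v_n}`. -/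
def WeaklyCClosed {V : Type*} [Fintype V] (c : ℕ) (G : SimpleGraph V) : Prop :=
  ∃ e : Fin (Fintype.card V) ≃ V, ∀ i : Fin (Fintype.card V), ∀ w : V,
    ¬ BadPairIn c G {x : V | ∃ j : Fin (Fintype.card V), i ≤ j ∧ e j = x} (e i) w

open Classical in
/-- Maximal cliques of the subgraph induced by a finite set `S`. -/
noncomputable def maxCliquesIn {V : Type*} (G : SimpleGraph V) (S : Finset V) :
    Finset (Finset V) :=
  S.powerset.filter fun K => G.IsClique (K : Set V) ∧ ∀ x ∈ S, ∃ y ∈ K, ¬ G.Adj x y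

theorem mem_maxCliquesIn {V : Type*} {G : SimpleGraph V} {S K : Finset V} :
    K ∈ maxCliquesIn G S ↔
      K ⊆ S ∧ (∀ x ∈ K, ∀ y ∈ K, x ≠ y → G.Adj x y) ∧ ∀ x ∈ S, ∃ y ∈ K, ¬ G.Adj x y := by
  simp only [maxCliquesIn, Finset.mem_filter, Finset.mem_powerset]
  rfl

theorem le_three_rpow (k : ℕ) : (k : ℝ) ≤ (3 : ℝ) ^ ((k : ℝ) / 3) := by
  have h : ((k : ℝ)) ^ 3 ≤ ((3 : ℝ) ^ ((k : ℝ) / 3)) ^ 3 := by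
    rw [← Real.rpow_natCast ((3 : ℝ) ^ ((k : ℝ) / 3)) 3, ← Real.rpow_mul (by norm_num)]
    have : (k : ℝ) / 3 * (3 : ℕ) = (k : ℝ) := by push_cast; ring
    rw [this, Real.rpow_natCast]
    exact_mod_cast cube_le_three_pow k
  exact le_of_pow_le_pow_left₀ (by norm_num) (by positivity) h

/-- Moon–Moser. -/
theorem card_maxCliquesIn_le {V : Type*} (G : SimpleGraph V) (m : ℕ) :
    ∀ S : Finset V, S.card = m →
      ((maxCliquesIn G S).card : ℝ) ≤ (3 : ℝ) ^ ((m : ℝ) / 3) := by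
  classical
  induction m using Nat.strong_induction_on with
  | _ m ih =>
    intro S hS
    rcases S.eq_empty_or_nonempty with rfl | hne
    · have h1 : (maxCliquesIn G ∅).card ≤ 1 := by
        apply le_trans (Finset.card_le_card (t := {∅}) _)
        · simp
        · intro K hK
          have := (mem_maxCliquesIn.1 hK).1
          simpa using this
      have hm : m = 0 := by simpa using hS.symm
      subst hm
      simpa using h1
    · let M : V → Finset V := fun u => S.filter fun w => ¬ G.Adj u w
      let N : V → Finset V := fun u => S.filter fun w => G.Adj u w
      have hMN : ∀ u, (N u).card + (M u).card = m := by
        intro u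
        rw [← hS]
        exact Finset.card_filter_add_card_filter_not _
      obtain ⟨u, huS, hu⟩ := S.exists_min_image (fun u => (M u).card) hne
      have hsub : maxCliquesIn G S ⊆
          (M u).biUnion fun w => (maxCliquesIn G (N w)).image (insert w) := by
        intro K hK
        obtain ⟨hKS, hKc, hKm⟩ := mem_maxCliquesIn.1 hK
        obtain ⟨w, hw, hwu⟩ := hKm u huS
        simp only [Finset.mem_biUnion, Finset.mem_image]
        refine ⟨w, Finset.mem_filter.2 ⟨hKS hw, hwu⟩, K.erase w, ?_, Finset.insert_erase hw⟩
        rw [mem_maxCliquesIn]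
        refine ⟨?_, ?_, ?_⟩
        · intro y hy
          rw [Finset.mem_erase] at hy
          exact Finset.mem_filter.2 ⟨hKS hy.2, hKc w hw y hy.2 (Ne.symm hy.1)⟩
        · intro x hx y hy
          exact hKc x (Finset.mem_of_mem_erase hx) y (Finset.mem_of_mem_erase hy)
        · intro x hx
          obtain ⟨hxS, hxw⟩ := Finset.mem_filter.1 hx
          obtain ⟨y, hy, hxy⟩ := hKm x hxS
          refine ⟨y, Finset.mem_erase.2 ⟨?_, hy⟩, hxy⟩
          rintro rfl
          exact hxy hxw.symm
      have hpos : ∀ w ∈ S, 0 < (M w).card := fun w hw =>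
        Finset.card_pos.2 ⟨w, Finset.mem_filter.2 ⟨hw, G.irrefl⟩⟩
      have hcard : (maxCliquesIn G S).card ≤ ∑ w ∈ M u, (maxCliquesIn G (N w)).card :=
        (Finset.card_le_card hsub).trans (Finset.card_biUnion_le.trans
          (Finset.sum_le_sum fun w _ => Finset.card_image_le))
      have hb : ∀ w ∈ M u, ((maxCliquesIn G (N w)).card : ℝ) ≤
          (3 : ℝ) ^ (((m : ℝ) - (M u).card) / 3) := by
        intro w hw
        have hwS : w ∈ S := (Finset.mem_filter.1 hw).1
        have h1 := hMN w
        have h2 := hpos w hwS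
        have h3 := hu w hwS
        refine (ih (N w).card (by omega) (N w) rfl).trans ?_
        apply Real.rpow_le_rpow_of_exponent_le (by norm_num)
        have h1' : ((N w).card : ℝ) + (M w).card = m := by exact_mod_cast h1
        have h3' : ((M u).card : ℝ) ≤ (M w).card := by exact_mod_cast h3
        linarith
      calc ((maxCliquesIn G S).card : ℝ)
          ≤ ∑ w ∈ M u, ((maxCliquesIn G (N w)).card : ℝ) := by exact_mod_cast hcard
        _ ≤ (M u).card * (3 : ℝ) ^ (((m : ℝ) - (M u).card) / 3) := by
            have := Finset.sum_le_card_nsmul _ _ _ hb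
            simpa [nsmul_eq_mul] using this
        _ ≤ (3 : ℝ) ^ (((M u).card : ℝ) / 3) * (3 : ℝ) ^ (((m : ℝ) - (M u).card) / 3) := by
            gcongr
            exact le_three_rpow _
        _ = (3 : ℝ) ^ ((m : ℝ) / 3) := by
            rw [← Real.rpow_add (by norm_num)]
            congr 1
            ring

open Classical in
theorem card_maxCliquesIn_step {V : Type*} (G : SimpleGraph V) (S : Finset V) (v : V)
    (hv : v ∈ S) (B : ℝ)
    (hB : ∀ u ∈ S.erase v, ¬ G.Adj v u →
      ((maxCliquesIn G (S.filter fun x => G.Adj v x ∧ G.Adj u x)).card : ℝ) ≤ B)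
    (hB0 : 0 ≤ B) :
    ((maxCliquesIn G S).card : ℝ) ≤
      (maxCliquesIn G (S.erase v)).card + (S.erase v).card * B := by
  let A := (maxCliquesIn G S).filter fun K => K.erase v ∈ maxCliquesIn G (S.erase v)
  let R := (maxCliquesIn G S).filter fun K => ¬ K.erase v ∈ maxCliquesIn G (S.erase v)
  let U := (S.erase v).filter fun u => ¬ G.Adj v u
  have hAR : A.card + R.card = (maxCliquesIn G S).card :=
    Finset.card_filter_add_card_filter_not _
  have key : ∀ K₁ ∈ maxCliquesIn G S, ∀ K₂ ∈ maxCliquesIn G S,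
      K₁.erase v = K₂.erase v → v ∈ K₁ → v ∈ K₂ := by
    intro K₁ h₁ K₂ h₂ he hv₁
    by_contra hv₂
    obtain ⟨-, hc, -⟩ := mem_maxCliquesIn.1 h₁
    obtain ⟨-, -, hm⟩ := mem_maxCliquesIn.1 h₂
    obtain ⟨y, hy, hvy⟩ := hm v hv
    rw [Finset.erase_eq_of_notMem hv₂] at he
    rw [← he, Finset.mem_erase] at hy
    exact hvy (hc v hv₁ y hy.2 (Ne.symm hy.1))
  have hA : A.card ≤ (maxCliquesIn G (S.erase v)).card := by
    apply Finset.card_le_card_of_injOn (fun K => K.erase v)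
    · intro K hK
      exact (Finset.mem_filter.1 hK).2
    · intro K₁ h₁ K₂ h₂ he
      have h₁' := (Finset.mem_filter.1 h₁).1
      have h₂' := (Finset.mem_filter.1 h₂).1
      have he' : K₁.erase v = K₂.erase v := he
      by_cases hv₁ : v ∈ K₁
      · have hv₂ := key K₁ h₁' K₂ h₂' he' hv₁
        rw [← Finset.insert_erase hv₁, ← Finset.insert_erase hv₂, he']
      · have hv₂ : v ∉ K₂ := fun h => hv₁ (key K₂ h₂' K₁ h₁' he'.symm h)
        rwa [Finset.erase_eq_of_notMem hv₁, Finset.erase_eq_of_notMem hv₂] at he'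
  have hsub : R ⊆ U.biUnion fun u =>
      (maxCliquesIn G (S.filter fun x => G.Adj v x ∧ G.Adj u x)).image (insert v) := by
    intro K hK
    obtain ⟨hK, hKn⟩ := Finset.mem_filter.1 hK
    obtain ⟨hKS, hKc, hKm⟩ := mem_maxCliquesIn.1 hK
    have hvK : v ∈ K := by
      by_contra hvK
      apply hKn
      rw [Finset.erase_eq_of_notMem hvK, mem_maxCliquesIn]
      refine ⟨Finset.subset_erase.2 ⟨hKS, hvK⟩, hKc, fun x hx => hKm x (Finset.mem_of_mem_erase hx)⟩
    have hu : ∃ u ∈ S.erase v, ∀ y ∈ K.erase v, G.Adj u y := by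
      by_contra! hcon
      apply hKn
      rw [mem_maxCliquesIn]
      exact ⟨Finset.erase_subset_erase v hKS, fun x hx y hy =>
        hKc x (Finset.mem_of_mem_erase hx) y (Finset.mem_of_mem_erase hy), hcon⟩
    obtain ⟨u, huS, hu⟩ := hu
    have huv : ¬ G.Adj v u := by
      intro h
      obtain ⟨y, hy, hyu⟩ := hKm u (Finset.mem_of_mem_erase huS)
      by_cases hyv : y = v
      · exact hyu (hyv ▸ h.symm)
      · exact hyu (hu y (Finset.mem_erase.2 ⟨hyv, hy⟩))
    simp only [Finset.mem_biUnion, Finset.mem_image]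
    refine ⟨u, Finset.mem_filter.2 ⟨huS, huv⟩, K.erase v, ?_, Finset.insert_erase hvK⟩
    rw [mem_maxCliquesIn]
    refine ⟨?_, fun x hx y hy =>
        hKc x (Finset.mem_of_mem_erase hx) y (Finset.mem_of_mem_erase hy), ?_⟩
    · intro y hy
      have hy' := Finset.mem_erase.1 hy
      exact Finset.mem_filter.2 ⟨hKS hy'.2, hKc v hvK y hy'.2 (Ne.symm hy'.1), hu y hy⟩
    · intro x hx
      obtain ⟨hxS, hxv, -⟩ := Finset.mem_filter.1 hx
      obtain ⟨y, hy, hxy⟩ := hKm x hxS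
      refine ⟨y, Finset.mem_erase.2 ⟨?_, hy⟩, hxy⟩
      rintro rfl
      exact hxy hxv.symm
  have hR : R.card ≤ ∑ u ∈ U,
      (maxCliquesIn G (S.filter fun x => G.Adj v x ∧ G.Adj u x)).card :=
    (Finset.card_le_card hsub).trans (Finset.card_biUnion_le.trans
      (Finset.sum_le_sum fun w _ => Finset.card_image_le))
  have hR2 : (R.card : ℝ) ≤ (S.erase v).card * B := by
    calc (R.card : ℝ) ≤ ∑ u ∈ U,
          ((maxCliquesIn G (S.filter fun x => G.Adj v x ∧ G.Adj u x)).card : ℝ) := by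
          exact_mod_cast hR
      _ ≤ U.card * B := by
          have := Finset.sum_le_card_nsmul U
            (fun u => ((maxCliquesIn G (S.filter fun x => G.Adj v x ∧ G.Adj u x)).card : ℝ)) B
            (fun u hu => hB u (Finset.mem_filter.1 hu).1 (Finset.mem_filter.1 hu).2)
          simpa [nsmul_eq_mul] using this
      _ ≤ (S.erase v).card * B := by
          gcongr
          exact Finset.filter_subset _ _
  have hA' : (A.card : ℝ) ≤ (maxCliquesIn G (S.erase v)).card := by exact_mod_cast hA
  have : ((maxCliquesIn G S).card : ℝ) = A.card + R.card := by exact_mod_cast hAR.symm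
  linarith

open Classical in
theorem card_maxCliquesIn_le_of_order {V : Type*} (G : SimpleGraph V) (r : V → ℕ) (c : ℕ)
    (hr : ∀ (S : Finset V) (v w : V), v ∈ S → w ∈ S → v ≠ w → (∀ x ∈ S, r v ≤ r x) →
      ¬ G.Adj v w → (S.filter fun x => G.Adj v x ∧ G.Adj w x).card < c) (hc : 0 < c) (m : ℕ) :
    ∀ S : Finset V, S.card = m → ((maxCliquesIn G S).card : ℝ) ≤
      (3 : ℝ) ^ (((c : ℝ) - 1) / 3) * ((m : ℝ) ^ 2 - m + 1) := by
  have hc1 : (1 : ℝ) ≤ c := by exact_mod_cast hc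
  have hB1 : (1 : ℝ) ≤ (3 : ℝ) ^ (((c : ℝ) - 1) / 3) :=
    Real.one_le_rpow (by norm_num) (by linarith)
  induction m with
  | zero =>
    intro S hS
    have := card_maxCliquesIn_le G 0 S hS
    have h0 : (3 : ℝ) ^ (((0 : ℕ) : ℝ) / 3) = 1 := by simp
    rw [h0] at this
    have := this.trans hB1
    simpa using this
  | succ m ih =>
    intro S hS
    have hne : S.Nonempty := Finset.card_pos.1 (by omega)
    obtain ⟨v, hv, hmin⟩ := S.exists_min_image r hne
    have hcard : (S.erase v).card = m := by rw [Finset.card_erase_of_mem hv]; omega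
    have h1 := card_maxCliquesIn_step G S v hv ((3 : ℝ) ^ (((c : ℝ) - 1) / 3)) (by
      intro u hu huv
      refine (card_maxCliquesIn_le G _ _ rfl).trans ?_
      apply Real.rpow_le_rpow_of_exponent_le (by norm_num)
      have h := hr S v u hv (Finset.mem_of_mem_erase hu) (Finset.ne_of_mem_erase hu).symm hmin huv
      have h' : ((S.filter fun x => G.Adj v x ∧ G.Adj u x).card : ℝ) + 1 ≤ c := by
        exact_mod_cast h
      linarith) (by positivity)
    have h2 := ih _ hcard
    rw [hcard] at h1
    have h3 : (0 : ℝ) ≤ (3 : ℝ) ^ (((c : ℝ) - 1) / 3) * m := by positivity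
    push_cast
    nlinarith

/-- Every weakly `c`-closed graph on `n` vertices has at most
`3 ^ ((c - 1)/3) * n ^ 2` maximal cliques. -/
theorem weaklyCClosed_card_maxCliques_le {V : Type*} [Fintype V] {c n : ℕ}
    (hc : 0 < c) (hn : 0 < n) (G : SimpleGraph V)
    (hcard : Fintype.card V = n) (hG : WeaklyCClosed c G) :
    ({K : Set V | IsMaxClique G K}.ncard : ℝ) ≤
      3 ^ (((c : ℝ) - 1) / 3) * (n : ℝ) ^ 2 := by
  classical
  obtain ⟨e, he⟩ := hG
  have main := card_maxCliquesIn_le_of_order G (fun x => (e.symm x).val) c (by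
    intro S v w hv hw hvw hmin hadj
    by_contra! hcon
    refine he (e.symm v) w ⟨⟨_, le_rfl, rfl⟩, ⟨e.symm w, hmin w hw, by simp⟩, by simpa using hvw,
      by simpa using hadj, hcon.trans ?_⟩
    rw [← Set.ncard_coe_finset]
    apply Set.ncard_le_ncard _ (Set.toFinite _)
    intro x hx
    have hx' := Finset.mem_filter.1 (Finset.mem_coe.1 hx)
    refine ⟨⟨by simpa using hx'.2.1, hx'.2.2⟩, ⟨e.symm x, hmin x hx'.1, by simp⟩⟩) hc n
    Finset.univ (by rw [Finset.card_univ, hcard])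
  have hle : {K : Set V | IsMaxClique G K}.ncard ≤ (maxCliquesIn G Finset.univ).card := by
    rw [← Set.ncard_coe_finset]
    apply Set.ncard_le_ncard_of_injOn (fun K => K.toFinset) _ _ (Set.toFinite _)
    · rintro K ⟨hK, hmax⟩
      rw [Finset.mem_coe, mem_maxCliquesIn]
      refine ⟨Finset.subset_univ _, ?_, ?_⟩
      · intro x hx y hy hxy
        exact hK (by simpa using hx) (by simpa using hy) hxy
      · intro x _
        by_contra! hcon
        have hcl : G.IsClique (insert x K) := by
          rw [SimpleGraph.isClique_insert]
          exact ⟨hK, fun y hy _ => hcon y (by simpa using hy)⟩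
        have hxK : x ∈ K := by
          rw [hmax _ hcl (Set.subset_insert _ _)]
          exact Set.mem_insert _ _
        exact G.irrefl (hcon x (by simpa using hxK))
    · intro K₁ _ K₂ _ h
      exact Set.toFinset_inj.1 h
  have hle' : ({K : Set V | IsMaxClique G K}.ncard : ℝ) ≤ (maxCliquesIn G Finset.univ).card := by
    exact_mod_cast hle
  have hn1 : (1 : ℝ) ≤ n := by exact_mod_cast hn
  refine (hle'.trans main).trans ?_
  gcongr
  linarith
end

section
/- Let G be a graph, v a vertex of G, and K a maximal clique of G with v ∈ K such that K \ {v} is not a maximal clique of G \ {v}. Then there exists a vertex u with u ≠ v and u not adjacent to v such that K \ {v} ⊆ N(v) ∩ N(u); moreover, K \ {v} is a maximal clique of the induced subgraph G[N(v) ∩ N(u)]. -/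
/-- `K` is a maximal clique of the subgraph of `G` induced by `S`: a clique of `G`
contained in `S` that is not properly contained in any other clique of `G`
contained in `S`.  (Cliques of `G[S]` are exactly cliques of `G` contained in `S`.) -/
def IsMaxCliqueIn {V : Type*} (G : SimpleGraph V) (S : Set V) (K : Set V) : Prop :=
  K ⊆ S ∧ G.IsClique K ∧ ∀ K' : Set V, K' ⊆ S → G.IsClique K' → K ⊆ K' → K = K'

/-- If `K` is a maximal clique of `G` containing `v` such that `K \ {v}` is not a
maximal clique of `G \ {v}`, then there is a non-neighbor `u ≠ v` of `v` with
`K \ {v} ⊆ N(v) ∩ N(u)`, and `K \ {v}` is a maximal clique of `G[N(v) ∩ N(u)]`. -/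
theorem maxClique_case_three {V : Type*} (G : SimpleGraph V) (v : V)
    (K : Set V) (hK : IsMaxClique G K) (hv : v ∈ K)
    (hnot : ¬ IsMaxCliqueIn G {u : V | u ≠ v} (K \ {v})) :
    ∃ u : V, u ≠ v ∧ ¬ G.Adj u v ∧
      K \ {v} ⊆ G.neighborSet v ∩ G.neighborSet u ∧
      IsMaxCliqueIn G (G.neighborSet v ∩ G.neighborSet u) (K \ {v}) := by
  obtain ⟨hc, hmax⟩ := hK
  have hc0 : G.IsClique (K \ {v}) := hc.subset Set.diff_subset
  have h1 : ∃ K' : Set V, K' ⊆ {u : V | u ≠ v} ∧ G.IsClique K' ∧ K \ {v} ⊆ K' ∧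
      K \ {v} ≠ K' := by
    by_contra h
    refine hnot ⟨fun x hx => hx.2, hc0, fun K' a b c => ?_⟩
    by_contra d
    exact h ⟨K', a, b, c, d⟩
  obtain ⟨K', hS, hc', hsub, hne⟩ := h1
  have h2 : ∃ u ∈ K', u ∉ K \ {v} := by
    by_contra h
    push Not at h
    exact hne (Set.Subset.antisymm hsub h)
  obtain ⟨u, huK', hu⟩ := h2
  have huv : u ≠ v := hS huK'
  have huK : u ∉ K := fun h => hu ⟨h, huv⟩
  have hadj : ∀ x ∈ K, x ≠ v → G.Adj u x := fun x hx hxv =>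
    hc' huK' (hsub ⟨hx, hxv⟩) (fun e => huK (e ▸ hx))
  have hsubN : K \ {v} ⊆ G.neighborSet v ∩ G.neighborSet u := fun x hx =>
    ⟨hc hv hx.1 (fun e => hx.2 e.symm), hadj x hx.1 hx.2⟩
  refine ⟨u, huv, fun hA => ?_, hsubN, hsubN, hc0, fun L hL hLc hKL => ?_⟩
  · have hins : G.IsClique (insert u K) := by
      refine hc.insert fun x hx _ => ?_
      by_cases hxv : x = v
      · exact hxv ▸ hA
      · exact hadj x hx hxv
    have := hmax _ hins (Set.subset_insert u K)
    exact huK (this ▸ Set.mem_insert u K)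
  · have hins : G.IsClique (insert v L) := hLc.insert fun x hx _ => (hL hx).1
    have hKs : K ⊆ insert v L := by
      intro x hx
      by_cases hxv : x = v
      · exact Or.inl hxv
      · exact Or.inr (hKL ⟨hx, hxv⟩)
    have hE := hmax _ hins hKs
    refine Set.Subset.antisymm hKL fun x hx => ⟨hE ▸ Set.mem_insert_of_mem v hx, fun e => ?_⟩
    have hxv : x = v := e
    exact G.loopless.irrefl v (hxv ▸ (hL hx).1)
end

section
/- Let G be a c-closed graph, v a vertex of G, and K a maximal clique of G with v ∈ K such that K \ {v} is not a maximal clique of G \ {v}. Then |K| ≤ c. -/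
/-- In a `c`-closed graph, a maximal clique `K` containing `v` such that `K \ {v}`
is not a maximal clique of `G \ {v}` has size at most `c`. -/
theorem maxClique_case_three_card_le {V : Type*} [Fintype V] {c : ℕ} (hc : 0 < c)
    (G : SimpleGraph V) (hG : CClosed c G) (v : V)
    (K : Set V) (hK : IsMaxClique G K) (hv : v ∈ K)
    (hnot : ¬ IsMaxCliqueIn G {u : V | u ≠ v} (K \ {v})) :
    K.ncard ≤ c := by
  by_contra hlt
  push Not at hlt
  apply hnot
  refine ⟨fun x hx => hx.2, hK.1.subset Set.diff_subset, ?_⟩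
  intro K' hK'S hK' hsub
  refine Set.Subset.antisymm hsub ?_
  intro w hw
  have hwv : w ≠ v := hK'S hw
  by_contra hwn
  have hwK : w ∉ K := fun h => hwn ⟨h, hwv⟩
  have hadj : ∀ x ∈ K, x ≠ v → G.Adj w x := by
    intro x hx hxv
    refine hK' hw (hsub ⟨hx, hxv⟩) ?_
    rintro rfl
    exact hwK hx
  have hcard : c ≤ (K \ {v}).ncard := by
    have := Set.ncard_diff_singleton_add_one hv (Set.toFinite K)
    omega
  have hvw : G.Adj v w := by
    refine hG v w hwv.symm (hcard.trans (Set.ncard_le_ncard ?_ (Set.toFinite _)))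
    intro x hx
    exact ⟨hK.1 hv hx.1 (fun h => hx.2 h.symm), hadj x hx.1 hx.2⟩
  have hcl : G.IsClique (insert w K) := by
    refine hK.1.insert ?_
    intro x hx _
    by_cases hxv : x = v
    · rw [hxv]
      exact hvw.symm
    · exact hadj x hx hxv
  have := hK.2 _ hcl (Set.subset_insert w K)
  exact hwK (this ▸ Set.mem_insert w K)
end

section
/- Let G be a graph, v a vertex of G, and A the set of vertices of G outside the closed neighborhood N[v] of v. For each u ∈ A, let S_u = N(v) ∩ N(u). Suppose C is a clique that is a maximal clique of the induced subgraph G[S_u] for some u ∈ A, but C ∪ {v} is not a maximal clique of G. Then either (a) there exists u' ∈ A with C ⊆ S_{u'} and C not a maximal clique of G[S_{u'}], or (b) there exists a maximal clique K of G with v ∈ K, K \ {v} a maximal clique of G \ {v}, and C ∪ {v} properly contained in K. -/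
theorem exists_maxClique_superset {V : Type*} (G : SimpleGraph V) (K₀ : Set V)
    (h : G.IsClique K₀) : ∃ K, K₀ ⊆ K ∧ IsMaxClique G K := by
  obtain ⟨K, hK, hmax⟩ := zorn_subset_nonempty {K : Set V | G.IsClique K} (by
    intro c hc hchain _
    refine ⟨⋃₀ c, ?_, fun s hs => Set.subset_sUnion_of_mem hs⟩
    rintro x ⟨s, hs, hx⟩ y ⟨t, ht, hy⟩ hxy
    rcases hchain.total hs ht with hst | hts
    · exact hc ht (hst hx) hy hxy
    · exact hc hs hx (hts hy) hxy) K₀ h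
  exact ⟨K, hK, hmax.prop, fun K' hK' hs => hs.antisymm (hmax.le_of_ge hK' hs)⟩

/-- Let `A` be the set of vertices outside the closed neighborhood of `v`, and for
`u ∈ A` let `S_u = N(v) ∩ N(u)`.  If a clique `C` is a maximal clique of
`G[S_u]` for some `u ∈ A` but `C ∪ {v}` is not a maximal clique of `G`, then
either (a) there is `u' ∈ A` with `C ⊆ S_{u'}` and `C` not maximal in
`G[S_{u'}]`, or (b) there is a maximal clique `K` of `G` with `v ∈ K`,
`K \ {v}` maximal in `G \ {v}`, and `C ∪ {v} ⊊ K`. -/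
theorem non_maximal_clique_dichotomy {V : Type*} (G : SimpleGraph V) (v : V)
    (A : Set V) (hA : A = {u : V | u ∉ G.neighborSet v ∪ {v}})
    (S : V → Set V) (hS : ∀ u : V, S u = G.neighborSet v ∩ G.neighborSet u)
    (C : Set V)
    (hC : ∃ u ∈ A, IsMaxCliqueIn G (S u) C)
    (hnot : ¬ IsMaxClique G (C ∪ {v})) :
    (∃ u' ∈ A, C ⊆ S u' ∧ ¬ IsMaxCliqueIn G (S u') C) ∨
    (∃ K : Set V, IsMaxClique G K ∧ v ∈ K ∧
      IsMaxCliqueIn G {u : V | u ≠ v} (K \ {v}) ∧ (C ∪ {v}) ⊂ K) := by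
  subst hA
  obtain ⟨u, hu, hCS, hCc, -⟩ := hC
  rw [hS] at hCS
  have hvC : v ∉ C := fun hv => G.irrefl (hCS hv).1
  have hCv : G.IsClique (C ∪ {v}) := by
    rintro x (hx | hx) y (hy | hy) hxy
    · exact hCc hx hy hxy
    · rw [Set.mem_singleton_iff.1 hy]; exact (hCS hx).1.symm
    · rw [Set.mem_singleton_iff.1 hx]; exact (hCS hy).1
    · exact absurd (hx.trans hy.symm) hxy
  obtain ⟨K, hsub, hK⟩ := exists_maxClique_superset G _ hCv
  have hne : C ∪ {v} ≠ K := fun h => hnot (h ▸ hK)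
  have hvK : v ∈ K := hsub (Or.inr rfl)
  have hss : C ∪ {v} ⊂ K := hsub.ssubset_of_ne hne
  by_cases hm : IsMaxCliqueIn G {u : V | u ≠ v} (K \ {v})
  · exact Or.inr ⟨K, hK, hvK, hm, hss⟩
  left
  have hKc : G.IsClique (K \ {v}) := hK.1.subset Set.diff_subset
  have hCK : C ⊆ K \ {v} := fun x hx => ⟨hsub (Or.inl hx), fun h => hvC (h ▸ hx)⟩
  have hm' : ∃ L : Set V, L ⊆ {u : V | u ≠ v} ∧ G.IsClique L ∧ K \ {v} ⊆ L ∧ K \ {v} ≠ L := by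
    by_contra hcon
    refine hm ⟨fun x hx => hx.2, hKc, fun L h1 h2 h3 => ?_⟩
    by_contra h4
    exact hcon ⟨L, h1, h2, h3, h4⟩
  obtain ⟨L, hLv, hLc, hKL, hneL⟩ := hm'
  obtain ⟨x, hxL, hxK⟩ := Set.exists_of_ssubset (hKL.ssubset_of_ne hneL)
  have hxv : x ≠ v := hLv hxL
  have hxK' : x ∉ K := fun h => hxK ⟨h, hxv⟩
  have hadj : ∀ y ∈ K \ {v}, G.Adj x y := fun y hy =>
    hLc hxL (hKL hy) (fun h => hxK' (h ▸ hy.1))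
  have hnadj : ¬ G.Adj v x := by
    intro h
    have hins : G.IsClique (insert x K) := hK.1.insert (fun y hy _ => by
      by_cases hyv : y = v
      · rw [hyv]; exact h.symm
      · exact hadj y ⟨hy, hyv⟩)
    have he := hK.2 _ hins (Set.subset_insert x K)
    exact hxK' (he ▸ Set.mem_insert x K)
  have hKS : K \ {v} ⊆ S x := by
    intro y hy
    rw [hS]
    exact ⟨hK.1 hvK hy.1 (fun h => hy.2 h.symm), hadj y hy⟩
  refine ⟨x, ?_, hCK.trans hKS, fun hmax => ?_⟩
  · rintro (h | h)
    · exact hnadj h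
    · exact hxv h
  · have he := hmax.2.2 _ hKS hKc hCK
    apply hne
    rw [he, Set.diff_union_self, Set.union_eq_left]
    exact Set.singleton_subset_iff.2 hvK
end
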